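/- arXiv:2406.18498 — 2 statements merged into one kernel-verified Lean document; each statement's English description precedes it below -/
import Mathlib

section
/- Let K be a field and f₁,...,f_r odd-degree homogeneous forms over ℝ in n variables with n > r. Then the system f₁ = ... = f_r = 0 has a nonzero real solution. -/
open MvPolynomial

theorem odd_alg_aux {A : Type} [CommRing A] [Algebra ℝ A] [Module.Finite ℝ A] (k : ℕ) :
    ∀ (M : Type) [AddCommGroup M] [Module ℝ M] [Module A M] [IsScalarTower ℝ A M]
      [Module.Finite ℝ M], Module.finrank ℝ M = k → Odd k → Nonempty (A →ₐ[ℝ] ℝ) := by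
  induction k using Nat.strong_induction_on with
  | _ k ih =>
  intro M _ _ _ _ _ hk hodd
  have hpos : 0 < Module.finrank ℝ M := by rw [hk]; exact hodd.pos
  have : Nontrivial M := Module.nontrivial_of_finrank_pos hpos
  have : Module.Finite A M := Module.Finite.of_restrictScalars_finite ℝ A M
  obtain ⟨N, hN, -⟩ := (eq_top_or_exists_le_coatom (⊥ : Submodule A M)).resolve_left bot_ne_top
  have hsimple : IsSimpleModule A (M ⧸ N) := isSimpleModule_iff_isCoatom.mpr hN
  have hsum := Submodule.finrank_quotient_add_finrank (N.restrictScalars ℝ)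
  have e1 : Module.finrank ℝ (M ⧸ N.restrictScalars ℝ) = Module.finrank ℝ (M ⧸ N) :=
    (Submodule.Quotient.restrictScalarsEquiv ℝ N).finrank_eq
  have e2 : Module.finrank ℝ (N.restrictScalars ℝ) = Module.finrank ℝ N := rfl
  rw [e1, e2, hk] at hsum
  have hfin : Module.Finite ℝ N := inferInstanceAs (Module.Finite ℝ (N.restrictScalars ℝ))
  have hnt : Nontrivial (M ⧸ N) := IsSimpleModule.nontrivial A _
  have hq : 0 < Module.finrank ℝ (M ⧸ N) := Module.finrank_pos
  by_cases ho : Odd (Module.finrank ℝ N)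
  · exact ih _ (by omega) N rfl ho
  · have ho2 : Odd (Module.finrank ℝ (M ⧸ N)) := by
      rw [Nat.not_odd_iff_even] at ho
      rw [← hsum] at hodd
      exact (Nat.odd_add.mp hodd).mpr ho
    obtain ⟨I, hI, ⟨e⟩⟩ := isSimpleModule_iff_quot_maximal.mp hsimple
    rw [(e.restrictScalars ℝ).finrank_eq] at ho2
    let _ : Field (A ⧸ I) := Ideal.Quotient.field I
    rcases Real.nonempty_algEquiv_or (A ⧸ I) with ⟨⟨h⟩⟩ | ⟨⟨h⟩⟩
    · exact ⟨h.toAlgHom.comp (Ideal.Quotient.mkₐ ℝ I)⟩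
    · have h2 := h.toLinearEquiv.finrank_eq
      rw [Complex.finrank_real_complex] at h2
      rw [h2] at ho2
      exact absurd ho2 (by decide)

theorem odd_alg {A : Type} [CommRing A] [Algebra ℝ A] [Module.Finite ℝ A]
    (h : Odd (Module.finrank ℝ A)) : Nonempty (A →ₐ[ℝ] ℝ) :=
  odd_alg_aux (A := A) _ A rfl h

noncomputable def bb {r : ℕ} {R : Type} [CommRing R] (d : Fin r → ℕ)
    (F : Fin r → MvPolynomial (Fin r) R) (c : Fin r →₀ ℕ) : MvPolynomial (Fin r) R :=
  ∏ i, (X i ^ (c i % d i) * F i ^ (c i / d i))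

abbrev Idx (r D : ℕ) : Type := {c : Fin r →₀ ℕ // c.degree ≤ D}

instance (r D : ℕ) : Finite (Idx r D) := (Finsupp.finite_of_degree_le D).to_subtype

noncomputable instance (r D : ℕ) : Fintype (Idx r D) := Fintype.ofFinite _

noncomputable def MM {r : ℕ} {R : Type} [CommRing R] (d : Fin r → ℕ)
    (F : Fin r → MvPolynomial (Fin r) R) (D : ℕ) : Matrix (Idx r D) (Idx r D) R :=
  fun c c' => coeff c'.1 (bb d F c.1)

theorem bb_map {r : ℕ} {R S : Type} [CommRing R] [CommRing S] (φ : R →+* S) (d : Fin r → ℕ)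
    (F : Fin r → MvPolynomial (Fin r) R) (c : Fin r →₀ ℕ) :
    bb d (fun i => map φ (F i)) c = map φ (bb d F c) := by
  simp [bb, map_prod]

theorem MM_map {r : ℕ} {R S : Type} [CommRing R] [CommRing S] (φ : R →+* S) (d : Fin r → ℕ)
    (F : Fin r → MvPolynomial (Fin r) R) (D : ℕ) :
    (MM d (fun i => map φ (F i)) D).det = φ (MM d F D).det := by
  rw [RingHom.map_det]
  congr 1
  ext c c'
  simp [MM, bb_map, coeff_map]

theorem bb_X {r : ℕ} {R : Type} [CommRing R] (d : Fin r → ℕ) (c : Fin r →₀ ℕ) :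
    bb d (fun i => (X i : MvPolynomial (Fin r) R) ^ d i) c = monomial c 1 := by
  rw [bb, monomial_eq, Finsupp.prod_fintype _ _ (by simp)]
  simp only [C_1, one_mul]
  refine Finset.prod_congr rfl fun i _ => ?_
  rw [← pow_mul, ← pow_add, Nat.mod_add_div]

theorem exists_good {r : ℕ} (d : Fin r → ℕ) (g : Fin r → MvPolynomial (Fin r) ℝ) (T : ℝ) :
    ∃ t, T < t ∧ ∀ D, (MM d (fun i => X i ^ d i + C t * g i) D).det ≠ 0 := by
  classical
  let G : Fin r → MvPolynomial (Fin r) (Polynomial ℝ) :=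
    fun i => X i ^ d i + C Polynomial.X * map Polynomial.C (g i)
  have hG : ∀ t : ℝ, (fun i => X i ^ d i + C t * g i) =
      fun i => map (Polynomial.evalRingHom t) (G i) := by
    intro t
    funext i
    have hh : (Polynomial.evalRingHom t).comp Polynomial.C = RingHom.id ℝ := by
      ext; simp
    simp [G, map_map, hh, MvPolynomial.map_id]
  have hdet : ∀ (t : ℝ) D, (MM d (fun i => X i ^ d i + C t * g i) D).det =
      (MM d G D).det.eval t := by
    intro t D
    rw [hG, MM_map]; rfl
  have hne : ∀ D, (MM d G D).det ≠ 0 := by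
    intro D h0
    have h1 := hdet 0 D
    rw [h0] at h1
    have h2 : MM d (fun i => X i ^ d i + C (0:ℝ) * g i) D = 1 := by
      ext c c'
      simp only [MM, map_zero, zero_mul, add_zero, bb_X, coeff_monomial, Matrix.one_apply,
        Subtype.ext_iff]
    rw [h2] at h1
    simp at h1
  have hc : (⋃ D, {t : ℝ | (MM d G D).det.IsRoot t}).Countable :=
    Set.countable_iUnion fun D => (Polynomial.finite_setOfPred_isRoot (hne D)).countable
  have hd := hc.dense_compl ℝ
  obtain ⟨t, ht1, ht2⟩ := hd.exists_mem_open (isOpen_Ioi (a := T)) ⟨T + 1, by simp⟩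
  refine ⟨t, ht2, fun D h => ht1 ?_⟩
  rw [hdet] at h
  exact Set.mem_iUnion.mpr ⟨D, h⟩

theorem bb_deg {r : ℕ} (d : Fin r → ℕ) (F : Fin r → MvPolynomial (Fin r) ℝ)
    (hF : ∀ i, (F i).totalDegree ≤ d i) (c : Fin r →₀ ℕ) :
    (bb d F c).totalDegree ≤ c.degree := by
  rw [bb, Finsupp.degree_eq_sum]
  refine (totalDegree_finsetProd _ _).trans (Finset.sum_le_sum fun i _ => ?_)
  refine (totalDegree_mul _ _).trans ?_
  rw [totalDegree_X_pow]
  have h1 := totalDegree_pow (F i) (c i / d i)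
  have h2 := Nat.mul_le_mul_left (c i / d i) (hF i)
  have h3 := Nat.mod_add_div (c i) (d i)
  rw [mul_comm] at h2
  nlinarith

theorem bb_li {r : ℕ} (d : Fin r → ℕ) (F : Fin r → MvPolynomial (Fin r) ℝ)
    (hdet : ∀ D, (MM d F D).det ≠ 0) : LinearIndependent ℝ (bb d F) := by
  classical
  rw [linearIndependent_iff]
  intro l hl
  let D := l.support.sup Finsupp.degree
  have hv : Matrix.vecMul (fun c : Idx r D => l c.1) (MM d F D) = 0 := by
    funext c'
    have h1 := congrArg (coeff c'.1) hl
    rw [Finsupp.linearCombination_apply, Finsupp.sum, coeff_sum] at h1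
    simp only [coeff_smul, coeff_zero, smul_eq_mul] at h1
    simp only [Matrix.vecMul, dotProduct, MM, Pi.zero_apply]
    rw [← h1]
    symm
    apply Finset.sum_bij_ne_zero (fun c hc _ => (⟨c, Finset.le_sup (f := Finsupp.degree) hc⟩ : Idx r D))
    · simp
    · intro a _ _ b _ _ h; simpa using h
    · intro b _ hb
      refine ⟨b.1, ?_, hb, rfl⟩
      rw [Finsupp.mem_support_iff]
      intro h; simp [h] at hb
    · simp
  have h0 := Matrix.eq_zero_of_vecMul_eq_zero (hdet D) hv
  ext c
  by_contra hc
  exact hc (congrFun h0 ⟨c, Finset.le_sup (f := Finsupp.degree) (by simpa using hc)⟩)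

theorem bb_span {r : ℕ} (d : Fin r → ℕ) (F : Fin r → MvPolynomial (Fin r) ℝ)
    (hF : ∀ i, (F i).totalDegree ≤ d i)
    (hdet : ∀ D, (MM d F D).det ≠ 0) : ⊤ ≤ Submodule.span ℝ (Set.range (bb d F)) := by
  classical
  rw [← (basisMonomials (Fin r) ℝ).span_eq, Submodule.span_le]
  rintro _ ⟨c, rfl⟩
  let D := c.degree
  let c0 : Idx r D := ⟨c, le_rfl⟩
  have hN : (MM d F D)⁻¹ * MM d F D = 1 := Matrix.nonsing_inv_mul _ (hdet D).isUnit
  have key : basisMonomials (Fin r) ℝ c = ∑ e : Idx r D, (MM d F D)⁻¹ c0 e • bb d F e.1 := by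
    ext e
    simp only [coe_basisMonomials, coeff_sum, coeff_smul, smul_eq_mul, coeff_monomial]
    by_cases he : e.degree ≤ D
    · have := congrFun (congrFun hN c0) ⟨e, he⟩
      rw [Matrix.mul_apply] at this
      simp only [MM] at this ⊢
      rw [this]
      simp [Matrix.one_apply, c0]
    · rw [if_neg (by rintro rfl; exact he le_rfl)]
      symm
      refine Finset.sum_eq_zero fun a _ => ?_
      rw [coeff_eq_zero_of_totalDegree_lt, mul_zero]
      have := bb_deg d F hF a.1
      have h2 := a.2
      have h3 : e.degree = ∑ i ∈ e.support, e i := rfl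
      omega
  rw [key]
  exact Submodule.sum_mem _ fun e _ => Submodule.smul_mem _ _ (Submodule.subset_span ⟨_, rfl⟩)

noncomputable def boxPt {r : ℕ} {d : Fin r → ℕ} (a : (i : Fin r) → Fin (d i)) : Fin r →₀ ℕ :=
  Finsupp.equivFunOnFinite.symm fun i => (a i : ℕ)

theorem bb_mul {r : ℕ} (d : Fin r → ℕ) (hd : ∀ i, 0 < d i) (F : Fin r → MvPolynomial (Fin r) ℝ)
    (c : Fin r →₀ ℕ) (i : Fin r) :
    F i * bb d F c = bb d F (c + Finsupp.single i (d i)) := by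
  classical
  simp only [bb]
  rw [← Finset.mul_prod_erase _ _ (Finset.mem_univ i),
    ← Finset.mul_prod_erase (a := i) _ _ (Finset.mem_univ i)]
  have h : ∀ j ∈ Finset.univ.erase i, (X j ^ (c j % d j) * F j ^ (c j / d j) : MvPolynomial _ ℝ) =
      X j ^ ((c + Finsupp.single i (d i)) j % d j) * F j ^ ((c + Finsupp.single i (d i)) j / d j) := by
    intro j hj
    have : i ≠ j := (Finset.ne_of_mem_erase hj).symm
    simp [Finsupp.single_apply, this]
  rw [Finset.prod_congr rfl h]
  simp only [Finsupp.add_apply, Finsupp.single_eq_same, Nat.add_mod_right,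
    Nat.add_div_right _ (hd i), pow_succ]
  ring

theorem exists_zero {r : ℕ} (d : Fin r → ℕ) (hd : ∀ i, Odd (d i))
    (F : Fin r → MvPolynomial (Fin r) ℝ) (hF : ∀ i, (F i).totalDegree ≤ d i)
    (hdet : ∀ D, (MM d F D).det ≠ 0) : ∃ p : Fin r → ℝ, ∀ i, eval p (F i) = 0 := by
  classical
  have hpos : ∀ i, 0 < d i := fun i => (hd i).pos
  let B := Module.Basis.mk (bb_li d F hdet) (bb_span d F hF hdet)
  have hB : ∀ c, B c = bb d F c := fun c => Module.Basis.mk_apply _ _ c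
  let I : Ideal (MvPolynomial (Fin r) ℝ) := Ideal.span (Set.range F)
  let π : MvPolynomial (Fin r) ℝ →ₗ[ℝ] (((i : Fin r) → Fin (d i)) → ℝ) :=
    LinearMap.pi fun a => B.coord (boxPt a)
  have hbox : Function.Injective (boxPt (d := d)) := by
    intro a b hab
    funext i
    exact Fin.ext (DFunLike.congr_fun hab i)
  have hsurj : Function.Surjective π := by
    intro v
    refine ⟨∑ a, v a • B (boxPt a), ?_⟩
    funext a
    simp [π, Finsupp.single_apply, hbox.eq_iff]
  have hmul : ∀ i p, π (p * F i) = 0 := by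
    intro i
    have : π ∘ₗ (LinearMap.mulRight ℝ (F i)) = 0 := by
      refine B.ext fun c => ?_
      funext a
      have h1 : B c * F i = B (c + Finsupp.single i (d i)) := by
        rw [hB, hB, mul_comm, bb_mul d hpos]
      simp only [LinearMap.comp_apply, LinearMap.mulRight_apply, h1, π, LinearMap.pi_apply,
        Module.Basis.coord_apply, Module.Basis.repr_self, LinearMap.zero_apply, Pi.zero_apply]
      rw [Finsupp.single_apply, if_neg]
      intro h
      have := DFunLike.congr_fun h i
      have h2 := (a i).2
      simp [boxPt] at this
      omega
    intro p
    exact LinearMap.congr_fun this p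
  have hker : I.restrictScalars ℝ = LinearMap.ker π := by
    apply le_antisymm
    · intro p hp
      have hp' : p ∈ I := hp
      rw [Ideal.mem_span_range_iff_exists_fun] at hp'
      obtain ⟨q, rfl⟩ := hp'
      rw [LinearMap.mem_ker, map_sum]
      exact Finset.sum_eq_zero fun i _ => hmul i _
    · intro p hp
      rw [LinearMap.mem_ker] at hp
      show p ∈ I
      rw [← B.linearCombination_repr p, Finsupp.linearCombination_apply, Finsupp.sum]
      refine Submodule.sum_mem _ fun c hc => ?_
      have hex : ∃ i, d i ≤ c i := by
        by_contra hcon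
        push Not at hcon
        have := congrFun hp (fun i => ⟨c i, hcon i⟩)
        have h2 : boxPt (d := d) (fun i => ⟨c i, hcon i⟩) = c := by ext i; rfl
        simp only [π, LinearMap.pi_apply, h2, Module.Basis.coord_apply, Pi.zero_apply] at this
        exact (Finsupp.mem_support_iff.mp hc) this
      obtain ⟨i, hi⟩ := hex
      have hc' : c = (c - Finsupp.single i (d i)) + Finsupp.single i (d i) :=
        (tsub_add_cancel_of_le (by simpa using hi)).symm
      have : B c ∈ I := by
        rw [hB, hc', ← bb_mul d hpos]
        exact Ideal.mul_mem_right _ _ (Ideal.subset_span ⟨i, rfl⟩)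
      exact Submodule.smul_of_tower_mem I _ this
  let e : (MvPolynomial (Fin r) ℝ ⧸ I) ≃ₗ[ℝ] (((i : Fin r) → Fin (d i)) → ℝ) :=
    (Submodule.Quotient.restrictScalarsEquiv ℝ I).symm ≪≫ₗ
      (Submodule.quotEquivOfEq _ _ hker) ≪≫ₗ π.quotKerEquivOfSurjective hsurj
  have hfin : Module.Finite ℝ (MvPolynomial (Fin r) ℝ ⧸ I) := Module.Finite.equiv e.symm
  have hodd : Odd (Module.finrank ℝ (MvPolynomial (Fin r) ℝ ⧸ I)) := by
    rw [e.finrank_eq, Module.finrank_fintype_fun_eq_card, Fintype.card_pi]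
    simp only [Fintype.card_fin]
    exact Finset.prod_induction _ Odd (fun _ _ => Odd.mul) odd_one fun i _ => hd i
  obtain ⟨φ⟩ := odd_alg hodd
  let ψ := φ.comp (Ideal.Quotient.mkₐ ℝ I)
  refine ⟨fun i => ψ (X i), fun i => ?_⟩
  have h1 : aeval (fun i => ψ (X i)) = ψ := (MvPolynomial.aeval_unique ψ).symm
  rw [← MvPolynomial.coe_aeval_eq_eval]
  change aeval (fun i => ψ (X i)) (F i) = 0
  rw [h1]
  have : Ideal.Quotient.mkₐ ℝ I (F i) = 0 :=
    Ideal.Quotient.eq_zero_iff_mem.mpr (Ideal.subset_span ⟨i, rfl⟩)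
  rw [AlgHom.comp_apply, this, map_zero]

theorem hom_eval_smul {n k : ℕ} (f : MvPolynomial (Fin n) ℝ) (hf : f.IsHomogeneous k)
    (s : ℝ) (x : Fin n → ℝ) : eval (s • x) f = s ^ k * eval x f := by
  rw [eval_eq, eval_eq, Finset.mul_sum]
  refine Finset.sum_congr rfl fun c hc => ?_
  have h : ∑ i ∈ c.support, c i = k := by
    have := hf.degree_eq_sum_deg_support hc
    rw [this]
  simp only [Pi.smul_apply, smul_eq_mul, mul_pow, Finset.prod_mul_distrib]
  rw [Finset.prod_pow_eq_pow_sum, h]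
  ring

theorem hom_aeval_deg {n r k : ℕ} (f : MvPolynomial (Fin n) ℝ) (hf : f.IsHomogeneous k)
    (y : Fin n → MvPolynomial (Fin r) ℝ) (hy : ∀ j, (y j).totalDegree ≤ 1) :
    (aeval y f).totalDegree ≤ k := by
  rw [aeval_def, eval₂_eq]
  refine totalDegree_finsetSum_le fun c hc => ?_
  have h : ∑ i ∈ c.support, c i = k := by
    have := hf.degree_eq_sum_deg_support hc
    rw [this]
  refine (totalDegree_mul _ _).trans ?_
  have h0 : (algebraMap ℝ (MvPolynomial (Fin r) ℝ) (coeff c f)).totalDegree = 0 :=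
    totalDegree_C _
  rw [h0, zero_add, ← h]
  refine (totalDegree_finsetProd _ _).trans (Finset.sum_le_sum fun i _ => ?_)
  refine (totalDegree_pow _ _).trans ?_
  simpa using Nat.mul_le_mul_left (c i) (hy i)

theorem perturbed (n r : ℕ) (hnr : r < n) (d : Fin r → ℕ) (hd : ∀ i, Odd (d i))
    (f : Fin r → MvPolynomial (Fin n) ℝ) (hf : ∀ i, (f i).IsHomogeneous (d i)) (T : ℝ) :
    ∃ t, T < t ∧ ∃ u : Fin n → ℝ, ‖u‖ = 1 ∧
      ∀ i, u (Fin.castLE hnr.le i) ^ d i + t * eval u (f i) = 0 := by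
  let y : Fin n → MvPolynomial (Fin r) ℝ := fun j =>
    if h : j.1 < r then X ⟨j.1, h⟩ else 1
  have hy : ∀ j, (y j).totalDegree ≤ 1 := by
    intro j
    by_cases h : j.1 < r <;> simp [y, h]
  obtain ⟨t, hT, ht⟩ := exists_good d (fun i => aeval y (f i)) T
  obtain ⟨p, hp⟩ := exists_zero d hd _ (fun i => by
    refine (totalDegree_add _ _).trans (max_le (by rw [totalDegree_X_pow]) ?_)
    refine (totalDegree_mul _ _).trans ?_
    rw [totalDegree_C, zero_add]
    exact hom_aeval_deg _ (hf i) y hy) ht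
  let z : Fin n → ℝ := fun j => eval p (y j)
  have hz0 : z ≠ 0 := by
    intro h
    have := congrFun h ⟨r, hnr⟩
    simp [z, y] at this
  have hzi : ∀ i, z (Fin.castLE hnr.le i) = p i := by
    intro i; simp [z, y]
  have hze : ∀ i, eval p (aeval y (f i)) = eval z (f i) := by
    intro i
    rw [← coe_aeval_eq_eval, ← coe_aeval_eq_eval]
    change (aeval p) (aeval y (f i)) = aeval z (f i)
    rw [← AlgHom.comp_apply, comp_aeval]
    rfl
  have hn : ‖z‖ ≠ 0 := norm_ne_zero_iff.mpr hz0
  refine ⟨t, hT, ‖z‖⁻¹ • z, ?_, fun i => ?_⟩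
  · rw [norm_smul, norm_inv, norm_norm, inv_mul_cancel₀ hn]
  · have h := hp i
    simp only [map_add, map_pow, eval_X, map_mul, eval_C, hze] at h
    rw [hom_eval_smul _ (hf i), Pi.smul_apply, hzi, smul_eq_mul, mul_pow]
    linear_combination (‖z‖⁻¹ ^ d i) * h

/-- Any system of `r` odd-degree homogeneous forms over `ℝ` in `n > r` variables has a
nonzero real solution. -/
theorem stmt0 (n r : ℕ) (hnr : r < n) (d : Fin r → ℕ) (hd : ∀ i, Odd (d i))
    (f : Fin r → MvPolynomial (Fin n) ℝ) (hf : ∀ i, (f i).IsHomogeneous (d i)) :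
    ∃ x : Fin n → ℝ, x ≠ 0 ∧ ∀ i, MvPolynomial.eval x (f i) = 0 := by
  let h : (Fin n → ℝ) → ℝ := fun u => ∑ i, |eval u (f i)|
  have hc : Continuous h :=
    continuous_finsetSum _ fun i _ => (MvPolynomial.continuous_eval (f i)).abs
  have hne : (Metric.sphere (0 : Fin n → ℝ) 1).Nonempty := by
    obtain ⟨t, -, u, hu, -⟩ := perturbed n r hnr d hd f hf 0
    exact ⟨u, by simpa using hu⟩
  obtain ⟨x, hx, hmin⟩ := (isCompact_sphere (0 : Fin n → ℝ) 1).exists_isMinOn hne hc.continuousOn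
  have hx1 : ‖x‖ = 1 := by simpa using hx
  have hx0 : x ≠ 0 := by
    rintro rfl
    simp at hx1
  have hnn : 0 ≤ h x := Finset.sum_nonneg fun i _ => abs_nonneg _
  have hzero : h x = 0 := by
    by_contra hcon
    have hpos : 0 < h x := lt_of_le_of_ne hnn (Ne.symm hcon)
    obtain ⟨t, ht, u, hu, hut⟩ := perturbed n r hnr d hd f hf (r / h x)
    have ht0 : 0 < t := lt_of_le_of_lt (by positivity) ht
    have h1 : h x ≤ h u := hmin (by simpa using hu)
    have h2 : t * h u ≤ r := by
      simp only [h, Finset.mul_sum]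
      calc ∑ i, t * |eval u (f i)| ≤ ∑ i : Fin r, (1 : ℝ) := by
            refine Finset.sum_le_sum fun i _ => ?_
            have h3 : t * eval u (f i) = - u (Fin.castLE hnr.le i) ^ d i := by
              linear_combination hut i
            have h4 : |t * eval u (f i)| = |u (Fin.castLE hnr.le i)| ^ d i := by
              rw [h3, abs_neg, abs_pow]
            rw [abs_mul, abs_of_pos ht0] at h4
            rw [h4]
            refine pow_le_one₀ (abs_nonneg _) ?_
            rw [← hu, ← Real.norm_eq_abs]
            exact norm_le_pi_norm u _
        _ = r := by simp
    rw [div_lt_iff₀ hpos] at ht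
    nlinarith
  refine ⟨x, hx0, fun i => ?_⟩
  have := (Finset.sum_eq_zero_iff_of_nonneg (fun i _ => abs_nonneg _)).mp hzero i (Finset.mem_univ i)
  exact abs_eq_zero.mp this
end

section
/- The field ℝ(t) of rational functions in one variable over the reals is a Birch field: for every odd positive integer d there exists N such that for any nonzero a₁,...,aₙ ∈ ℝ(t) with n ≥ N, the equation a₁x₁^d + ... + aₙxₙ^d = 0 has a nonzero solution in ℝ(t)ⁿ. -/
open MvPolynomial

set_option linter.unusedSectionVars false

namespace BirchAux

variable {σ : Type} [Fintype σ] [DecidableEq σ]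

lemma mem_monIdeal (T : Finset σ) (d : ℕ) (p : MvPolynomial σ ℝ) :
    p ∈ Ideal.span ((fun i => (X i : MvPolynomial σ ℝ) ^ d) '' (T : Set σ)) ↔
      ∀ m ∈ p.support, ∃ i ∈ T, d ≤ m i := by
  have := @mem_ideal_span_monomial_image σ ℝ _ p ((fun i => Finsupp.single i d) '' (T : Set σ))
  rw [Set.image_image] at this
  simp only [X_pow_eq_monomial]
  rw [this]
  simp

lemma monIdeal_colon (T : Finset σ) (d : ℕ) (k : σ) (hk : k ∉ T) (h : MvPolynomial σ ℝ)
    (hh : h * X k ^ d ∈ Ideal.span ((fun i => (X i : MvPolynomial σ ℝ) ^ d) '' (T : Set σ))) :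
    h ∈ Ideal.span ((fun i => (X i : MvPolynomial σ ℝ) ^ d) '' (T : Set σ)) := by
  rw [mem_monIdeal] at hh ⊢
  intro m hm
  have : m + Finsupp.single k d ∈ (h * X k ^ d).support := by
    rw [mem_support_iff, X_pow_eq_monomial, coeff_mul_monomial, mul_one]
    exact mem_support_iff.1 hm
  obtain ⟨i, hi, hd⟩ := hh _ this
  refine ⟨i, hi, ?_⟩
  have hik : k ≠ i := by rintro rfl; exact hk hi
  simpa [Finsupp.single_apply, hik] using hd

/-- specialization of the parameter -/
noncomputable def sp (a : ℝ) : MvPolynomial σ (Polynomial ℝ) →+* MvPolynomial σ ℝ :=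
  MvPolynomial.map (Polynomial.evalRingHom a)

/-- constant lift -/
noncomputable def lf : MvPolynomial σ ℝ →+* MvPolynomial σ (Polynomial ℝ) :=
  MvPolynomial.map Polynomial.C

lemma sp_lf (a : ℝ) (p : MvPolynomial σ ℝ) : sp a (lf p) = p := by
  unfold sp lf
  rw [MvPolynomial.map_map]
  have : (Polynomial.evalRingHom a).comp Polynomial.C = RingHom.id ℝ := by ext; simp
  rw [this, MvPolynomial.map_id]

lemma sp_ker (a : ℝ) (p : MvPolynomial σ (Polynomial ℝ)) (h : sp a p = 0) :
    ∃ q, p = C (Polynomial.X - Polynomial.C a) * q := by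
  change C (Polynomial.X - Polynomial.C a) ∣ p
  rw [MvPolynomial.C_dvd_iff_dvd_coeff]
  intro m
  rw [Polynomial.dvd_iff_isRoot]
  have := congrArg (coeff m) h
  simpa [sp, coeff_map] using this

/-- the family -/
noncomputable def FF (d : ℕ) (g : σ → MvPolynomial σ ℝ) (i : σ) : MvPolynomial σ (Polynomial ℝ) :=
  X i ^ d + C Polynomial.X * lf (g i)

lemma sp_FF (a : ℝ) (d : ℕ) (g : σ → MvPolynomial σ ℝ) (i : σ) :
    sp a (FF d g i) = X i ^ d + C a * g i := by
  unfold FF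
  rw [map_add, map_mul, sp_lf]
  simp [sp]

lemma syz (d : ℕ) (g : σ → MvPolynomial σ ℝ) (T : Finset σ) :
    ∀ h : σ → MvPolynomial σ (Polynomial ℝ), sp 0 (∑ i ∈ T, h i * FF d g i) = 0 →
      ∃ h' : σ → MvPolynomial σ (Polynomial ℝ),
        ∑ i ∈ T, h i * FF d g i = C Polynomial.X * ∑ i ∈ T, h' i * FF d g i := by
  induction T using Finset.induction_on with
  | empty => intro h _; exact ⟨h, by simp⟩
  | insert k T hk ih =>
    intro h hh
    have hF : ∀ i, sp 0 (FF d g i) = X i ^ d := fun i => by rw [sp_FF]; simp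
    rw [Finset.sum_insert hk, map_add, map_mul, map_sum] at hh
    simp only [map_mul, hF] at hh
    have hmem : sp 0 (h k) * X k ^ d ∈
        Ideal.span ((fun i => (X i : MvPolynomial σ ℝ) ^ d) '' (T : Set σ)) := by
      rw [eq_neg_of_add_eq_zero_left hh]
      refine neg_mem (Ideal.sum_mem _ fun i hi => Ideal.mul_mem_left _ _ ?_)
      exact Ideal.subset_span ⟨i, hi, rfl⟩
    have := monIdeal_colon T d k hk _ hmem
    obtain ⟨c, hc⟩ := (Submodule.mem_span_image_finset_iff_exists_fun' (R := MvPolynomial σ ℝ)).1 this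
    simp only [smul_eq_mul] at hc
    obtain ⟨q, hq⟩ := sp_ker 0 (h k - ∑ i ∈ T, lf (c i) * FF d g i) (by
      rw [map_sub, map_sum]
      simp only [map_mul, hF, sp_lf]
      rw [hc, sub_self])
    rw [Polynomial.C_0, sub_zero] at hq
    obtain ⟨h', hh'⟩ := ih (fun i => h i + lf (c i) * FF d g k) (by
      rw [map_sum]
      simp only [map_mul, map_add, hF, sp_lf, add_mul, Finset.sum_add_distrib]
      rw [← hh, ← hc, Finset.sum_mul, add_comm]
      congr 1
      exact Finset.sum_congr rfl fun i _ => by ring)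
    refine ⟨Function.update h' k q, ?_⟩
    rw [Finset.sum_insert hk, Finset.sum_insert hk, Function.update_self]
    have e1 : ∑ i ∈ T, Function.update h' k q i * FF d g i = ∑ i ∈ T, h' i * FF d g i :=
      Finset.sum_congr rfl fun i hi => by
        rw [Function.update_of_ne]; rintro rfl; exact hk hi
    rw [e1, mul_add, ← hh', sub_eq_iff_eq_add.1 hq]
    simp only [add_mul, Finset.sum_add_distrib, Finset.sum_mul]
    have e2 : ∑ i ∈ T, lf (c i) * FF d g i * FF d g k = ∑ i ∈ T, lf (c i) * FF d g k * FF d g i :=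
      Finset.sum_congr rfl fun i _ => by ring
    rw [e2]; ring

/-- the ideal -/
noncomputable def II (d : ℕ) (g : σ → MvPolynomial σ ℝ) : Ideal (MvPolynomial σ (Polynomial ℝ)) :=
  Ideal.span (Set.range (FF d g))

lemma II_torsion (d : ℕ) (g : σ → MvPolynomial σ ℝ) (p : MvPolynomial σ (Polynomial ℝ))
    (h : C Polynomial.X * p ∈ II d g) : p ∈ II d g := by
  obtain ⟨c, hc⟩ := Ideal.mem_span_range_iff_exists_fun.1 h
  obtain ⟨h', hh'⟩ := syz d g Finset.univ c (by rw [hc]; simp [sp])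
  rw [hc] at hh'
  have hX : (C Polynomial.X : MvPolynomial σ (Polynomial ℝ)) ≠ 0 := by simp
  rw [mul_left_cancel₀ hX hh']
  exact Ideal.mem_span_range_iff_exists_fun.2 ⟨h', rfl⟩

lemma red_zero (d : ℕ) (hd : 0 < d) (p : MvPolynomial σ ℝ) (hp : p ∈ restrictDegree σ ℝ (d-1))
    (hI : p ∈ Ideal.span ((fun i => (X i : MvPolynomial σ ℝ) ^ d) '' ((Finset.univ : Finset σ) : Set σ))) :
    p = 0 := by
  rw [mem_monIdeal] at hI
  rw [mem_restrictDegree] at hp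
  by_contra h
  obtain ⟨m, hm⟩ := Finset.nonempty_of_ne_empty (fun h' => h (support_eq_empty.1 h'))
  obtain ⟨i, _, hi⟩ := hI m hm
  have := hp m hm i
  omega

lemma II_indep (d : ℕ) (hd : 0 < d) (g : σ → MvPolynomial σ ℝ) (p : MvPolynomial σ (Polynomial ℝ))
    (hp : p ∈ restrictDegree σ (Polynomial ℝ) (d-1)) (hI : p ∈ II d g) : p = 0 := by
  have key : ∀ n : ℕ, ∀ p : MvPolynomial σ (Polynomial ℝ),
      p ∈ restrictDegree σ (Polynomial ℝ) (d-1) → p ∈ II d g → C (Polynomial.X ^ n) ∣ p := by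
    intro n
    induction n with
    | zero => intro p _ _; simp
    | succ n ih =>
      intro p hp hI
      have h0 : sp 0 p = 0 := by
        apply red_zero d hd
        · rw [mem_restrictDegree] at hp ⊢
          intro m hm
          refine hp m ?_
          exact support_map_subset _ _ hm
        · obtain ⟨c, hc⟩ := Ideal.mem_span_range_iff_exists_fun.1 hI
          rw [← hc, map_sum]
          refine Ideal.sum_mem _ fun i hi => ?_
          rw [map_mul, sp_FF]
          refine Ideal.mul_mem_left _ _ ?_
          simp only [map_zero, zero_mul, add_zero]
          exact Ideal.subset_span ⟨i, by simp, rfl⟩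
      obtain ⟨q, rfl⟩ := sp_ker 0 p h0
      rw [Polynomial.C_0, sub_zero] at *
      rw [pow_succ', C_mul]
      refine mul_dvd_mul_left _ (ih q ?_ (II_torsion d g q hI))
      rw [mem_restrictDegree] at hp ⊢
      intro m hm
      refine hp m ?_
      rw [mem_support_iff, coeff_C_mul]
      exact mul_ne_zero Polynomial.X_ne_zero (mem_support_iff.1 hm)
  ext1 m
  ext n
  have := key (n+1) p hp hI
  rw [MvPolynomial.C_dvd_iff_dvd_coeff] at this
  simpa using Polynomial.X_pow_dvd_iff.1 (this m) n (Nat.lt_succ_self n)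


lemma red_sup (d : ℕ) (hd : 0 < d) (g : σ → MvPolynomial σ ℝ) (hg : ∀ i, (g i).totalDegree ≤ d)
    (m : ℕ) (p : MvPolynomial σ (Polynomial ℝ))
    (hp : p ∈ restrictTotalDegree σ (Polynomial ℝ) m) :
    ∃ q ∈ restrictTotalDegree σ (Polynomial ℝ) m,
      p - (Polynomial.X : Polynomial ℝ) • q ∈
        restrictDegree σ (Polynomial ℝ) (d-1) ⊔ (II d g).restrictScalars (Polynomial ℝ) := by
  set W := restrictDegree σ (Polynomial ℝ) (d-1) ⊔ (II d g).restrictScalars (Polynomial ℝ)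
  have hmon : ∀ e : σ →₀ ℕ, e.degree ≤ m → ∃ q ∈ restrictTotalDegree σ (Polynomial ℝ) m,
      monomial e (1 : Polynomial ℝ) - (Polynomial.X : Polynomial ℝ) • q ∈ W := by
    intro e he
    by_cases hr : ∀ i, e i ≤ d - 1
    · refine ⟨0, zero_mem _, ?_⟩
      rw [smul_zero, sub_zero]
      apply Submodule.mem_sup_left
      rw [mem_restrictDegree]
      intro s hs i
      have := support_monomial_subset hs
      rw [Finset.mem_singleton] at this
      rw [this]; exact hr i
    · push Not at hr
      obtain ⟨i, hi⟩ := hr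
      have hle : Finsupp.single i d ≤ e := by
        rw [Finsupp.single_le_iff]; omega
      obtain ⟨e', rfl⟩ := exists_add_of_le hle
      have hdeg : d + e'.degree ≤ m := by simpa using he
      refine ⟨- (lf (g i) * monomial e' 1), ?_, ?_⟩
      · apply neg_mem
        rw [mem_restrictTotalDegree]
        refine (totalDegree_mul _ _).trans ?_
        have h1 : (lf (g i)).totalDegree ≤ d := 
          (Finset.sup_mono (support_map_subset _ _)).trans (hg i)
        have h2 : (monomial e' (1 : Polynomial ℝ)).totalDegree ≤ e'.degree :=
          totalDegree_monomial_le _ _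
        omega
      · apply Submodule.mem_sup_right
        have : monomial (Finsupp.single i d + e') (1 : Polynomial ℝ)
            - (Polynomial.X : Polynomial ℝ) • -(lf (g i) * monomial e' 1)
            = monomial e' 1 * FF d g i := by
          rw [FF, smul_eq_C_mul, X_pow_eq_monomial, mul_add, monomial_mul, add_comm e', mul_one]
          ring
        rw [this]
        exact Ideal.mul_mem_left _ _ (Ideal.subset_span ⟨i, rfl⟩)
  have hp' : p = ∑ e ∈ p.support, coeff e p • monomial e (1 : Polynomial ℝ) := by
    conv_lhs => rw [p.as_sum]
    refine Finset.sum_congr rfl fun e _ => ?_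
    rw [smul_monomial, smul_eq_mul, mul_one]
  rw [mem_restrictTotalDegree] at hp
  have hs : ∀ e ∈ p.support, e.degree ≤ m := fun e he => (le_totalDegree he).trans hp
  choose! q hq1 hq2 using hmon
  refine ⟨∑ e ∈ p.support, coeff e p • q e, ?_, ?_⟩
  · exact Submodule.sum_mem _ fun e he => Submodule.smul_mem _ _ (hq1 e (hs e he))
  · nth_rewrite 1 [hp']
    rw [Finset.smul_sum, ← Finset.sum_sub_distrib]
    refine Submodule.sum_mem _ fun e he => ?_
    rw [smul_comm, ← smul_sub]
    exact Submodule.smul_mem _ _ (hq2 e (hs e he))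

lemma rtd_fg (m : ℕ) : (restrictTotalDegree σ (Polynomial ℝ) m).FG := by
  have hfin : {n : σ →₀ ℕ | n.degree ≤ m}.Finite := Finsupp.finite_of_degree_le m
  have : Finite {n : σ →₀ ℕ | n.degree ≤ m} := hfin
  exact Module.Finite.iff_fg.1 (Module.Finite.of_basis
    (basisRestrictSupport (Polynomial ℝ) {n : σ →₀ ℕ | n.degree ≤ m}))

lemma exists_f (d : ℕ) (hd : 0 < d) (g : σ → MvPolynomial σ ℝ) (hg : ∀ i, (g i).totalDegree ≤ d)
    (m : ℕ) : ∃ f : Polynomial ℝ, f ≠ 0 ∧ ∀ p ∈ restrictTotalDegree σ (Polynomial ℝ) m,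
      f • p ∈ restrictDegree σ (Polynomial ℝ) (d-1) ⊔ (II d g).restrictScalars (Polynomial ℝ) := by
  set W := restrictDegree σ (Polynomial ℝ) (d-1) ⊔ (II d g).restrictScalars (Polynomial ℝ) with hW
  obtain ⟨f, hf1, hf2⟩ := Submodule.exists_sub_one_mem_and_smul_eq_zero_of_fg_of_le_smul
    (Ideal.span {(Polynomial.X : Polynomial ℝ)})
    ((restrictTotalDegree σ (Polynomial ℝ) m).map W.mkQ) ((rtd_fg m).map _) (by
      rintro _ ⟨p, hp, rfl⟩
      obtain ⟨q, hq, hpq⟩ := red_sup d hd g hg m p hp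
      have : W.mkQ p = (Polynomial.X : Polynomial ℝ) • W.mkQ q := by
        rw [← map_smul, ← sub_eq_zero, ← map_sub]
        exact (Submodule.Quotient.mk_eq_zero W).2 hpq
      rw [this]
      exact Submodule.smul_mem_smul (Ideal.mem_span_singleton_self _) ⟨q, hq, rfl⟩)
  refine ⟨f, ?_, ?_⟩
  · rintro rfl
    rw [zero_sub, Ideal.mem_span_singleton] at hf1
    have := Polynomial.X_dvd_iff.1 hf1
    simp at this
  · intro p hp
    have := hf2 _ ⟨p, hp, rfl⟩
    rw [← map_smul] at this
    exact (Submodule.Quotient.mk_eq_zero W).1 this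

lemma exists_f_all (d : ℕ) (hd : 0 < d) (g : σ → MvPolynomial σ ℝ)
    (hg : ∀ i, (g i).totalDegree ≤ d) :
    ∃ f : Polynomial ℝ, f ≠ 0 ∧ ∀ p : MvPolynomial σ (Polynomial ℝ), ∃ k : ℕ,
      f ^ k • p ∈ restrictDegree σ (Polynomial ℝ) (d-1) ⊔
        (II d g).restrictScalars (Polynomial ℝ) := by
  obtain ⟨f, hf0, hf⟩ := exists_f d hd g hg (Fintype.card σ * (d-1) + 1)
  refine ⟨f, hf0, fun p => ?_⟩
  set W := restrictDegree σ (Polynomial ℝ) (d-1) ⊔ (II d g).restrictScalars (Polynomial ℝ) with hW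
  induction p using MvPolynomial.induction_on with
  | C a =>
    refine ⟨0, Submodule.mem_sup_left (Submodule.smul_mem _ _ ?_)⟩
    rw [mem_restrictDegree]
    intro s hs i
    have := support_monomial_subset (show s ∈ (monomial 0 a).support from hs)
    rw [Finset.mem_singleton] at this
    simp [this]
  | add p q hp hq =>
    obtain ⟨k, hk⟩ := hp
    obtain ⟨l, hl⟩ := hq
    refine ⟨k + l, ?_⟩
    rw [smul_add]
    refine add_mem ?_ ?_
    · rw [add_comm, pow_add, mul_smul]; exact Submodule.smul_mem _ _ hk
    · rw [pow_add, mul_smul]; exact Submodule.smul_mem _ _ hl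
  | mul_X p i hp =>
    obtain ⟨k, hk⟩ := hp
    obtain ⟨r, hr, t, ht, hrt⟩ := Submodule.mem_sup.1 hk
    refine ⟨k + 1, ?_⟩
    have : f ^ (k+1) • (p * X i) = f • (r * X i) + f • (t * X i) := by
      rw [pow_succ', mul_smul, ← smul_mul_assoc, ← hrt, add_mul, smul_add]
    rw [this]
    refine add_mem (hf _ ?_) (Submodule.smul_mem _ _ (Submodule.mem_sup_right ?_))
    · rw [mem_restrictTotalDegree]
      refine (totalDegree_mul _ _).trans ?_
      rw [totalDegree_X]
      refine Nat.add_le_add_right ?_ 1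
      rw [mem_restrictDegree] at hr
      refine Finset.sup_le fun s hs => ?_
      rw [Finsupp.sum_fintype _ _ (by simp)]
      calc ∑ j, s j ≤ ∑ j : σ, (d-1) := Finset.sum_le_sum fun j _ => hr s hs j
        _ = _ := by simp
    · exact Ideal.mul_mem_right _ _ ht

/-- the specialized ideal -/
noncomputable def Ia (d : ℕ) (g : σ → MvPolynomial σ ℝ) (a : ℝ) : Ideal (MvPolynomial σ ℝ) :=
  Ideal.span (Set.range fun i => X i ^ d + C a * g i)

lemma sp_II (d : ℕ) (g : σ → MvPolynomial σ ℝ) (a : ℝ) (p : MvPolynomial σ (Polynomial ℝ))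
    (hp : p ∈ II d g) : sp a p ∈ Ia d g a := by
  obtain ⟨c, hc⟩ := Ideal.mem_span_range_iff_exists_fun.1 hp
  rw [← hc, map_sum]
  refine Ideal.sum_mem _ fun i _ => ?_
  rw [map_mul, sp_FF]
  exact Ideal.mul_mem_left _ _ (Ideal.subset_span ⟨i, rfl⟩)

lemma sp_smul (a : ℝ) (f : Polynomial ℝ) (p : MvPolynomial σ (Polynomial ℝ)) :
    sp a (f • p) = C (f.eval a) * sp a p := by
  rw [smul_eq_C_mul, map_mul]; simp [sp]

lemma sp_red (a : ℝ) (k : ℕ) (p : MvPolynomial σ (Polynomial ℝ))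
    (hp : p ∈ restrictDegree σ (Polynomial ℝ) k) : sp a p ∈ restrictDegree σ ℝ k := by
  rw [mem_restrictDegree] at hp ⊢
  exact fun m hm => hp m (support_map_subset _ _ hm)

lemma lf_red (k : ℕ) (p : MvPolynomial σ ℝ)
    (hp : p ∈ restrictDegree σ ℝ k) : lf p ∈ restrictDegree σ (Polynomial ℝ) k := by
  rw [mem_restrictDegree] at hp ⊢
  exact fun m hm => hp m (support_map_subset _ _ hm)

lemma finrank_red (d : ℕ) (hd : 0 < d) :
    Module.finrank ℝ (restrictDegree σ ℝ (d-1)) = d ^ Fintype.card σ := by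
  have e : {n : σ →₀ ℕ | ∀ i, n i ≤ d - 1} ≃ (σ → Fin d) :=
    { toFun := fun n i => ⟨n.1 i, by have := n.2 i; omega⟩
      invFun := fun v => ⟨Finsupp.equivFunOnFinite.symm fun i => (v i : ℕ), fun i => by
        have := (v i).2
        simp; omega⟩
      left_inv := fun n => by ext; simp
      right_inv := fun v => by ext; simp }
  have b := (basisRestrictSupport ℝ {n : σ →₀ ℕ | ∀ i, n i ≤ d - 1}).reindex e
  have := Module.finrank_eq_card_basis b
  rw [Fintype.card_fun, Fintype.card_fin] at this
  exact this

lemma finrank_quot (d : ℕ) (hd : 0 < d) (g : σ → MvPolynomial σ ℝ)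
    (hg : ∀ i, (g i).totalDegree ≤ d) :
    ∃ f : Polynomial ℝ, f ≠ 0 ∧ ∀ a : ℝ, f.eval a ≠ 0 →
      Module.finrank ℝ (MvPolynomial σ ℝ ⧸ Ia d g a) = d ^ Fintype.card σ := by
  obtain ⟨f, hf0, hf⟩ := exists_f_all d hd g hg
  refine ⟨f, hf0, fun a ha => ?_⟩
  rw [← finrank_red (σ := σ) d hd]
  symm
  let L : restrictDegree σ ℝ (d-1) →ₗ[ℝ] (MvPolynomial σ ℝ ⧸ Ia d g a) :=
    (Ideal.Quotient.mkₐ ℝ (Ia d g a)).toLinearMap.comp (Submodule.subtype _)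
  refine LinearEquiv.finrank_eq (LinearEquiv.ofBijective L ⟨?_, ?_⟩)
  · rw [← LinearMap.ker_eq_bot, LinearMap.ker_eq_bot']
    rintro ⟨p, hp⟩ hL
    have hpI : p ∈ Ia d g a := Ideal.Quotient.eq_zero_iff_mem.1 hL
    obtain ⟨c, hc⟩ := Ideal.mem_span_range_iff_exists_fun.1 hpI
    obtain ⟨q, hq⟩ := sp_ker a (lf p - ∑ i, lf (c i) * FF d g i) (by
      rw [map_sub, map_sum]
      simp only [map_mul, sp_lf, sp_FF]
      rw [hc, sub_self])
    obtain ⟨k, hk⟩ := hf q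
    obtain ⟨r, hr, t, ht, hrt⟩ := Submodule.mem_sup.1 hk
    have hz : f ^ k • lf p - (Polynomial.X - Polynomial.C a) • r = 0 := by
      apply II_indep d hd g
      · exact sub_mem (Submodule.smul_mem _ _ (lf_red _ _ hp)) (Submodule.smul_mem _ _ hr)
      · have : f ^ k • lf p - (Polynomial.X - Polynomial.C a) • r =
            C (f ^ k) * ∑ i, lf (c i) * FF d g i + C (Polynomial.X - Polynomial.C a) * t := by
          rw [sub_eq_iff_eq_add.1 hq]
          simp only [smul_eq_C_mul] at hrt ⊢
          linear_combination -C (Polynomial.X - Polynomial.C a) * hrt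
        rw [this]
        refine add_mem (Ideal.mul_mem_left _ _ (Ideal.sum_mem _ fun i _ => ?_))
          (Ideal.mul_mem_left _ _ ht)
        exact Ideal.mul_mem_left _ _ (Ideal.subset_span ⟨i, rfl⟩)
    have h0 := congrArg (sp a) hz
    rw [map_sub, sp_smul, sp_smul, sp_lf] at h0
    simp only [Polynomial.eval_sub, Polynomial.eval_X, Polynomial.eval_C, sub_self, map_zero,
      zero_mul, sub_zero, Polynomial.eval_pow] at h0
    rcases mul_eq_zero.1 h0 with h | h
    · rw [C_eq_zero] at h
      exact absurd h (pow_ne_zero _ ha)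
    · exact Subtype.ext h
  · intro y
    obtain ⟨p, rfl⟩ := Ideal.Quotient.mk_surjective y
    obtain ⟨k, hk⟩ := hf (lf p)
    obtain ⟨r, hr, t, ht, hrt⟩ := Submodule.mem_sup.1 hk
    have h0 := congrArg (sp a) hrt
    rw [map_add, sp_smul, sp_lf, Polynomial.eval_pow] at h0
    have hne : f.eval a ^ k ≠ 0 := pow_ne_zero _ ha
    refine ⟨⟨(f.eval a ^ k)⁻¹ • sp a r, Submodule.smul_mem _ _ (sp_red _ _ _ hr)⟩, ?_⟩
    change Ideal.Quotient.mk _ ((f.eval a ^ k)⁻¹ • sp a r) = _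
    rw [Ideal.Quotient.eq]
    have : (f.eval a ^ k)⁻¹ • sp a r - p = - (C (f.eval a ^ k)⁻¹ * sp a t) := by
      have hC : (C (f.eval a ^ k)⁻¹ * C (f.eval a ^ k) : MvPolynomial σ ℝ) = 1 := by
        rw [← C_mul, inv_mul_cancel₀ hne, C_1]
      rw [smul_eq_C_mul]
      linear_combination C (f.eval a ^ k)⁻¹ * h0 + p * hC
    rw [this]
    exact neg_mem (Ideal.mul_mem_left _ _ (sp_II d g a t ht))

lemma odd_hom (n : ℕ) : ∀ (A : Type) [CommRing A] [Algebra ℝ A], Module.finrank ℝ A = n →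
    Odd n → Nonempty (A →ₐ[ℝ] ℝ) := by
  induction n using Nat.strong_induction_on with
  | _ n ih =>
    intro A _ _ hn hodd
    have hpos : 0 < Module.finrank ℝ A := by rw [hn]; exact hodd.pos
    have : Module.Finite ℝ A := Module.finite_of_finrank_pos hpos
    have : Nontrivial A := Module.nontrivial_of_finrank_pos hpos
    by_cases hF : IsField A
    · let _ := hF.toField
      rcases Real.nonempty_algEquiv_or A with ⟨⟨e⟩⟩ | ⟨⟨e⟩⟩
      · exact ⟨e.toAlgHom⟩
      · exfalso
        have := e.toLinearEquiv.finrank_eq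
        rw [hn, Complex.finrank_real_complex] at this
        rw [this] at hodd
        exact absurd hodd (by decide)
    · obtain ⟨a, ha0, hau⟩ := Ring.not_isField_iff_exists_ideal_bot_lt_and_lt_top.1 hF |>.elim
        (fun I hI => by
          obtain ⟨a, haI, ha⟩ := Submodule.exists_mem_ne_zero_of_ne_bot hI.1.ne'
          exact (⟨a, ha, fun hu => hI.2.ne (Ideal.eq_top_of_isUnit_mem _ haI hu)⟩ :
            ∃ a : A, a ≠ 0 ∧ ¬ IsUnit a))
      let μ : A →ₗ[ℝ] A := LinearMap.mulLeft ℝ a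
      let J : Ideal A := Ideal.span {a}
      let K : Ideal A := LinearMap.ker (LinearMap.mulLeft A a)
      have h1 : Module.finrank ℝ (LinearMap.range μ) + Module.finrank ℝ (LinearMap.ker μ) = n := by
        rw [← hn]; exact LinearMap.finrank_range_add_finrank_ker μ
      have hJ : Module.finrank ℝ (A ⧸ J) + Module.finrank ℝ (LinearMap.range μ) = n := by
        have := Submodule.finrank_quotient_add_finrank (J.restrictScalars ℝ)
        have e : J.restrictScalars ℝ = LinearMap.range μ := by
          ext x
          simp only [Submodule.restrictScalars_mem, LinearMap.mem_range, J,
            Ideal.mem_span_singleton, μ, LinearMap.mulLeft_apply]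
          exact ⟨fun ⟨y, hy⟩ => ⟨y, hy.symm⟩, fun ⟨y, hy⟩ => ⟨y, hy.symm⟩⟩
        rw [hn, e] at this
        rw [← this, ← e]; rfl
      have hK : Module.finrank ℝ (A ⧸ K) + Module.finrank ℝ (LinearMap.ker μ) = n := by
        have := Submodule.finrank_quotient_add_finrank (K.restrictScalars ℝ)
        have e : K.restrictScalars ℝ = LinearMap.ker μ := by
          ext x
          simp [K, μ]
        rw [hn, e] at this
        rw [← this, ← e]; rfl
      have hJpos : 0 < Module.finrank ℝ (LinearMap.range μ) := by
        rw [Module.finrank_pos_iff]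
        refine ⟨⟨⟨a, 1, by simp [μ]⟩, 0, fun h => ha0 (congrArg Subtype.val h)⟩⟩
      have hJlt : 0 < Module.finrank ℝ (A ⧸ J) := by
        have : Nontrivial (A ⧸ J) := Ideal.Quotient.nontrivial_iff.2 (by
          rw [Ne, Ideal.span_singleton_eq_top]; exact hau)
        exact Module.finrank_pos
      rcases Nat.even_or_odd (Module.finrank ℝ (A ⧸ J)) with he | ho
      · have : Odd (Module.finrank ℝ (A ⧸ K)) := by
          have : Module.finrank ℝ (A ⧸ K) = Module.finrank ℝ (LinearMap.range μ) := by omega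
          rw [this]
          rw [← hJ] at hodd
          exact (Nat.odd_add.1 hodd).not.1 (by simpa using he) |> fun h => by simpa using h
        obtain ⟨φ⟩ := ih _ (by omega) (A ⧸ K) rfl this
        exact ⟨φ.comp (Ideal.Quotient.mkₐ ℝ K)⟩
      · obtain ⟨φ⟩ := ih _ (by omega) (A ⧸ J) rfl ho
        exact ⟨φ.comp (Ideal.Quotient.mkₐ ℝ J)⟩

/-- Affine version: solutions for all but finitely many parameters. -/
lemma affine_sol (d : ℕ) (hd : Odd d) (g : σ → MvPolynomial σ ℝ)
    (hg : ∀ i, (g i).totalDegree ≤ d) :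
    ∃ f : Polynomial ℝ, f ≠ 0 ∧ ∀ a : ℝ, f.eval a ≠ 0 →
      ∃ x : σ → ℝ, ∀ i, x i ^ d + a * eval x (g i) = 0 := by
  obtain ⟨f, hf0, hf⟩ := finrank_quot d hd.pos g hg
  refine ⟨f, hf0, fun a ha => ?_⟩
  obtain ⟨φ⟩ := odd_hom _ (MvPolynomial σ ℝ ⧸ Ia d g a) (hf a ha) hd.pow
  let ψ := φ.comp (Ideal.Quotient.mkₐ ℝ (Ia d g a))
  refine ⟨fun i => ψ (X i), fun i => ?_⟩
  have hψ : ∀ p, ψ p = eval (fun i => ψ (X i)) p := fun p => by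
    rw [← MvPolynomial.aeval_eq_eval]
    exact DFunLike.congr_fun (MvPolynomial.aeval_unique ψ) p
  have h0 : ψ (X i ^ d + C a * g i) = 0 := by
    have : Ideal.Quotient.mk (Ia d g a) (X i ^ d + C a * g i) = 0 :=
      Ideal.Quotient.eq_zero_iff_mem.2 (Ideal.subset_span ⟨i, rfl⟩)
    change φ (Ideal.Quotient.mk (Ia d g a) (X i ^ d + C a * g i)) = 0
    rw [this, map_zero]
  rw [hψ] at h0
  simpa using h0

lemma eval_smul_homog {τ : Type} (d : ℕ) (f : MvPolynomial τ ℝ) (hf : f.IsHomogeneous d) (c : ℝ)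
    (y : τ → ℝ) : eval (c • y) f = c ^ d * eval y f := by
  rw [eval_eq, eval_eq, Finset.mul_sum]
  refine Finset.sum_congr rfl fun e he => ?_
  simp only [Pi.smul_apply, smul_eq_mul, mul_pow, Finset.prod_mul_distrib]
  rw [Finset.prod_pow_eq_pow_sum, ← hf.degree_eq_sum_deg_support he]
  ring

lemma dehom_deg (d : ℕ) (f : MvPolynomial (Option σ) ℝ) (hf : f.IsHomogeneous d) :
    (aeval (fun o : Option σ => (o.elim 1 X : MvPolynomial σ ℝ)) f).totalDegree ≤ d := by
  rw [aeval_def, eval₂_eq]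
  refine totalDegree_finsetSum_le fun e he => ?_
  refine (totalDegree_mul _ _).trans ?_
  rw [algebraMap_eq, totalDegree_C, zero_add]
  refine (totalDegree_finsetProd _ _).trans ?_
  rw [hf.degree_eq_sum_deg_support he]
  refine Finset.sum_le_sum fun o _ => ?_
  refine (totalDegree_pow _ _).trans ?_
  cases o <;> simp

lemma homog_sol (d : ℕ) (hd : Odd d) (f : σ → MvPolynomial (Option σ) ℝ)
    (hf : ∀ i, (f i).IsHomogeneous d) :
    ∃ y : Option σ → ℝ, y ≠ 0 ∧ ∀ i, eval y (f i) = 0 := by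
  obtain ⟨P, hP0, hP⟩ := affine_sol d hd
    (fun i => aeval (fun o : Option σ => (o.elim 1 X : MvPolynomial σ ℝ)) (f i))
    (fun i => dehom_deg d (f i) (hf i))
  have hapx : ∀ n : ℕ, ∃ y ∈ Metric.sphere (0 : Option σ → ℝ) 1,
      ∀ i, |eval y (f i)| ≤ 1 / ((n : ℝ) + 1) := by
    intro n
    obtain ⟨a, ha, hPa⟩ : ∃ a : ℝ, (n : ℝ) + 1 ≤ a ∧ P.eval a ≠ 0 := by
      by_contra! h
      have : (Set.Ici ((n : ℝ) + 1)).Finite :=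
        (Polynomial.finite_setOfPred_isRoot hP0).subset fun a ha => h a ha
      exact Set.Ici_infinite _ this
    obtain ⟨x, hx⟩ := hP a hPa
    have hapos : 0 < a := by
      have : (0 : ℝ) ≤ n := Nat.cast_nonneg n
      linarith
    let Y : Option σ → ℝ := fun o => o.elim 1 x
    have hY : ∀ i, eval Y (f i) = - x i ^ d / a := by
      intro i
      have h1 : eval x (aeval (fun o : Option σ => (o.elim 1 X : MvPolynomial σ ℝ)) (f i))
          = eval Y (f i) := by
        rw [← aeval_eq_eval, ← AlgHom.comp_apply, comp_aeval, ← aeval_eq_eval]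
        congr 2
        funext o
        cases o <;> simp [Y]
      have := hx i
      rw [h1] at this
      field_simp
      linarith
    have hYn : 0 < ‖Y‖ := by
      rw [norm_pos_iff]
      intro h
      have := congrFun h none
      simp [Y] at this
    refine ⟨‖Y‖⁻¹ • Y, ?_, fun i => ?_⟩
    · rw [mem_sphere_zero_iff_norm, norm_smul, norm_inv, norm_norm, inv_mul_cancel₀ hYn.ne']
    · rw [eval_smul_homog d _ (hf i), hY]
      have hxi : |x i| ≤ ‖Y‖ := norm_le_pi_norm Y (some i)
      have e : ‖Y‖⁻¹ ^ d * (-x i ^ d / a) = -((x i / ‖Y‖) ^ d / a) := by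
        rw [div_pow, inv_pow]; ring
      rw [e, abs_neg, abs_div, abs_pow, abs_div, abs_norm, abs_of_pos hapos]
      have h1 : (|x i| / ‖Y‖) ^ d ≤ 1 :=
        pow_le_one₀ (by positivity) ((div_le_one hYn).2 hxi)
      have hn : (0 : ℝ) < n + 1 := by positivity
      exact div_le_div₀ zero_le_one h1 hn ha
  have hcont : Continuous fun y : Option σ → ℝ => ∑ i, |eval y (f i)| :=
    continuous_finsetSum _ fun i _ => (MvPolynomial.continuous_eval (f i)).abs
  obtain ⟨y, hy, hmin⟩ := (isCompact_sphere (0 : Option σ → ℝ) 1).exists_isMinOn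
    (by obtain ⟨y, hy, _⟩ := hapx 0; exact ⟨y, hy⟩) hcont.continuousOn
  refine ⟨y, ?_, ?_⟩
  · rintro rfl
    simp at hy
  · have hle : ∑ i, |eval y (f i)| ≤ 0 := by
      have hlim := (tendsto_one_div_add_atTop_nhds_zero_nat (𝕜 := ℝ)).const_mul
        (Fintype.card σ : ℝ)
      rw [mul_zero] at hlim
      refine ge_of_tendsto' hlim fun n => ?_
      obtain ⟨z, hz, hz'⟩ := hapx n
      refine (hmin hz).trans ?_
      calc ∑ i, |eval z (f i)| ≤ ∑ i : σ, 1 / ((n : ℝ) + 1) := Finset.sum_le_sum fun i _ => hz' i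
        _ = _ := by simp
    have h0 := le_antisymm hle (Finset.sum_nonneg fun i _ => abs_nonneg _)
    intro i
    have := (Finset.sum_eq_zero_iff_of_nonneg fun i _ => abs_nonneg _).1 h0 i (Finset.mem_univ i)
    exact abs_eq_zero.1 this

/-- `r` forms of odd degree `d` in more than `r` variables have a common real zero. -/
lemma forms_sol {τ : Type} [Fintype τ] (d r : ℕ) (hd : Odd d) (hr : r < Fintype.card τ)
    (f : ℕ → MvPolynomial τ ℝ) (hf : ∀ k, (f k).IsHomogeneous d) :
    ∃ y : τ → ℝ, y ≠ 0 ∧ ∀ k < r, eval y (f k) = 0 := by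
  classical
  obtain ⟨m, hm⟩ : ∃ m, Fintype.card τ = m + 1 := ⟨Fintype.card τ - 1, by omega⟩
  let e : τ ≃ Option (Fin m) := Fintype.equivOfCardEq (by simp [hm])
  obtain ⟨y, hy0, hy⟩ := homog_sol (σ := Fin m) d hd (fun i => rename e (f i))
    (fun i => (hf i).rename_isHomogeneous)
  refine ⟨y ∘ e, fun h => hy0 ?_, fun k hk => ?_⟩
  · funext o
    have := congrFun h (e.symm o)
    simpa using this
  · have := hy ⟨k, by omega⟩
    rwa [eval_rename] at this

lemma poly_sol (d n : ℕ) (hd : Odd d) (hn : d + 1 ≤ n) (p : Fin n → Polynomial ℝ) :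
    ∃ x : Fin n → Polynomial ℝ, x ≠ 0 ∧ ∑ i, p i * x i ^ d = 0 := by
  classical
  let D := Finset.univ.sup fun i => (p i).natDegree
  let τ := Fin n × Fin (D + 1)
  let Q : Polynomial (MvPolynomial τ ℝ) := ∑ i : Fin n, (p i).map MvPolynomial.C *
    (∑ j : Fin (D+1), Polynomial.C (X (i, j)) * Polynomial.X ^ (j : ℕ)) ^ d
  have hmul : ∀ (a b : ℕ) (u v : Polynomial (MvPolynomial τ ℝ)),
      (∀ k, (u.coeff k).IsHomogeneous a) → (∀ k, (v.coeff k).IsHomogeneous b) →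
      ∀ k, ((u * v).coeff k).IsHomogeneous (a + b) := by
    intro a b u v hu hv k
    rw [Polynomial.coeff_mul]
    exact IsHomogeneous.sum _ _ _ fun c _ => (hu _).mul (hv _)
  have hpow : ∀ (u : Polynomial (MvPolynomial τ ℝ)), (∀ k, (u.coeff k).IsHomogeneous 1) →
      ∀ e k, ((u ^ e).coeff k).IsHomogeneous e := by
    intro u hu e
    induction e with
    | zero =>
      intro k
      rw [pow_zero, Polynomial.coeff_one]
      split_ifs
      · exact isHomogeneous_one _ _
      · exact isHomogeneous_zero _ _ _
    | succ e ih => rw [pow_succ]; exact hmul _ _ _ _ ih hu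
  have hQ : ∀ k, (Q.coeff k).IsHomogeneous d := by
    intro k
    simp only [Q, Polynomial.finsetSum_coeff]
    refine IsHomogeneous.sum _ _ _ fun i _ => ?_
    have h1 : ∀ k, (((p i).map (MvPolynomial.C : ℝ →+* MvPolynomial τ ℝ)).coeff k).IsHomogeneous 0 :=
      fun k => by rw [Polynomial.coeff_map]; exact isHomogeneous_C _ _
    have h2 : ∀ k, ((∑ j : Fin (D+1), Polynomial.C (X (i, j) : MvPolynomial τ ℝ) *
        Polynomial.X ^ (j : ℕ)).coeff k).IsHomogeneous 1 := fun k => by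
      rw [Polynomial.finsetSum_coeff]
      refine IsHomogeneous.sum _ _ _ fun j _ => ?_
      rw [Polynomial.coeff_C_mul_X_pow]
      split_ifs
      · exact isHomogeneous_X _ _
      · exact isHomogeneous_zero _ _ _
    have h3 := hmul 0 d _ _ h1 (hpow _ h2 d) k
    rwa [zero_add] at h3
  obtain ⟨y, hy0, hy⟩ := forms_sol d (D + d * D + 1) hd (by
    simp only [τ, Fintype.card_prod, Fintype.card_fin]
    have := hd.pos
    nlinarith [Nat.mul_le_mul_right (D+1) hn]) (fun k => Q.coeff k) hQ
  let x : Fin n → Polynomial ℝ := fun i => ∑ j : Fin (D+1), Polynomial.C (y (i, j)) *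
    Polynomial.X ^ (j : ℕ)
  have hQx : Q.map (eval y) = ∑ i, p i * x i ^ d := by
    have hC : (eval y).comp MvPolynomial.C = RingHom.id ℝ := by ext; simp
    simp only [Q, x, Polynomial.map_sum, Polynomial.map_mul,
      Polynomial.map_pow, Polynomial.map_map, Polynomial.map_C, Polynomial.map_X, eval_X, hC,
      Polynomial.map_id]
  refine ⟨x, fun h => hy0 ?_, ?_⟩
  · funext ⟨i, j⟩
    have h1 := congrArg (fun q => Polynomial.coeff q (j : ℕ)) (congrFun h i)
    simp only [x, Polynomial.finsetSum_coeff, Polynomial.coeff_C_mul_X_pow, Pi.zero_apply,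
      Polynomial.coeff_zero] at h1
    simpa [Fin.val_inj] using h1
  · ext k
    rw [Polynomial.coeff_zero]
    by_cases hk : k < D + d * D + 1
    · rw [← hQx, Polynomial.coeff_map]; exact hy k hk
    · apply Polynomial.coeff_eq_zero_of_natDegree_lt
      refine lt_of_le_of_lt ?_ (show D + d * D < k by omega)
      refine Polynomial.natDegree_sum_le_of_forall_le _ _ fun i _ => ?_
      refine Polynomial.natDegree_mul_le.trans (add_le_add ?_ ?_)
      · exact Finset.le_sup (f := fun i => (p i).natDegree) (Finset.mem_univ i)
      · refine Polynomial.natDegree_pow_le.trans (Nat.mul_le_mul_left d ?_)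
        refine Polynomial.natDegree_sum_le_of_forall_le _ _ fun j _ => ?_
        refine (Polynomial.natDegree_C_mul_X_pow_le _ _).trans ?_
        omega

end BirchAux

/-- `ℝ(t)` is a Birch field: for every odd `d` there is `N` such that every diagonal
degree-`d` equation with nonzero coefficients in `n ≥ N` variables has a nonzero solution. -/
theorem stmt2 (d : ℕ) (hd : Odd d) :
    ∃ N : ℕ, ∀ n, N ≤ n → ∀ a : Fin n → RatFunc ℝ, (∀ i, a i ≠ 0) →
      ∃ x : Fin n → RatFunc ℝ, x ≠ 0 ∧ ∑ i, a i * x i ^ d = 0 := by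
  refine ⟨d + 1, fun n hn a _ => ?_⟩
  obtain ⟨b, hb⟩ := IsLocalization.exist_integer_multiples_of_finite
    (nonZeroDivisors (Polynomial ℝ)) a
  choose p hp using hb
  obtain ⟨x, hx0, hx⟩ := BirchAux.poly_sol d n hd hn p
  refine ⟨fun i => algebraMap (Polynomial ℝ) (RatFunc ℝ) (x i), fun h => hx0 ?_, ?_⟩
  · funext i
    have := congrFun h i
    simpa using this
  · have hb0 : algebraMap (Polynomial ℝ) (RatFunc ℝ) b ≠ 0 := by
      simp
    have h := congrArg (algebraMap (Polynomial ℝ) (RatFunc ℝ)) hx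
    rw [map_sum, map_zero] at h
    refine (mul_eq_zero.1 ?_).resolve_left hb0
    rw [← h, Finset.mul_sum]
    refine Finset.sum_congr rfl fun i _ => ?_
    rw [map_mul, map_pow, hp i, Algebra.smul_def, mul_assoc]
end
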